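/- Let p be a set partition word with N(p) ≥ 3 distinct letters and length |p| ≤ 2N(p). If φ_{aba}^{N(p)−1}(p) is not sorted, then p is equivalent to (a_1 a_2 ⋯ a_{N(p)})^2, the concatenation of two copies of a word listing N(p) distinct letters. -/

import Mathlib

/-- West's stack-sorting map, implemented with an explicit stack (top = head). -/
def sWestAux : List ℕ → List ℕ → List ℕ
  | [], st => st
  | x :: xs, [] => sWestAux xs [x]
  | x :: xs, t :: st =>
      if t < x then t :: sWestAux (x :: xs) st
      else sWestAux xs (x :: t :: st)
termination_by l st => 2 * l.length + st.length

def sWest (l : List ℕ) : List ℕ := sWestAux l []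

/-- A word contains a subsequence equivalent to `aba`. -/
def HasABA (l : List ℕ) : Prop :=
  ∃ i j k : Fin l.length, i < j ∧ j < k ∧ l.get i = l.get k ∧ l.get j ≠ l.get i

instance (l : List ℕ) : Decidable (HasABA l) := by
  unfold HasABA; infer_instance

/-- Xia's stack-sorting map φ_{aba}, with explicit stack (top = head). -/
def phiAux : List ℕ → List ℕ → List ℕ
  | [], st => st
  | x :: xs, [] => phiAux xs [x]
  | x :: xs, t :: st =>
      if HasABA (x :: t :: st) then t :: phiAux (x :: xs) st
      else phiAux xs (x :: t :: st)
termination_by l st => 2 * l.length + st.length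

def phi (p : List ℕ) : List ℕ := phiAux p []

/-- A set partition word is sorted: all occurrences of each letter are consecutive. -/
def SortedWord (p : List ℕ) : Prop :=
  ∀ i j k : Fin p.length, i < j → j < k → p.get i = p.get k → p.get j = p.get i

/-- Number of distinct letters. -/
def Nletters (p : List ℕ) : ℕ := p.toFinset.card

def Avoids231 (l : List ℕ) : Prop :=
  ¬ ∃ i j k : Fin l.length, i < j ∧ j < k ∧ l.get k < l.get i ∧ l.get i < l.get j


/-- Two words are equivalent if related by a letterwise bijection of the alphabet. -/
def EquivWords (p q : List ℕ) : Prop := ∃ f : ℕ ≃ ℕ, q = p.map f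

/-!
If `a ∉ w`, the copy of `a` at the bottom of the stack does not affect how `w` is processed, whence
`φ(a w) = φ(w) a` and `φ(a w a r) = φ(w) φ(a r) a`. Call a letter unclumped if its occurrences are
not consecutive. From this recursion, a letter `b` that is unclumped in `φ(l)` is part of a
subsequence `dbdb` of `l` in which `d` starts before `b`; so the earliest unclumped letter becomes
clumped, and the number of unclumped letters drops at each step.

If `|p| ≤ 2n` and `φⁿ⁻¹(p)` is not sorted, then `φⁿ⁻²(p)` contains a subsequence `dbdb`, hence two
unclumped letters, and counting shows that `p` has exactly `n` letters, each unclumped and occurring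
twice, and that `φ` clumps exactly one of them. Write `p = a u a v`, so that
`φ(p) = φ(u) φ(v) a a` and every letter other than `a` is unclumped in `φ(u) φ(v)`. A letter
occurring twice in `u` does not occur in `v`, so it is unclumped in `φ(u)`; but the earliest
unclumped letter of `u` is not. Hence `u`, and likewise `v`, has no repeated letter, and `φ`
reverses both. Deleting clumped letters commutes with `φ`, so induction applies to `φ(u) φ(v)`; its
two halves `φ(u)` and `φ(v)` are thus equal, whence `u = v`.
-/

open List

section Words

variable {α : Type*} {a b c : α} {l m : List α}

theorem triple_sublist_iff_exists_get :
    [a, b, c] <+ l ↔ ∃ i j k : Fin l.length, i < j ∧ j < k ∧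
      l.get i = a ∧ l.get j = b ∧ l.get k = c := by
  constructor
  · intro h
    obtain ⟨f, hf⟩ := sublist_iff_exists_fin_orderEmbedding_get_eq.1 h
    exact ⟨f ⟨0, by simp⟩, f ⟨1, by simp⟩, f ⟨2, by simp⟩, by simp, by simp,
      (hf _).symm, (hf _).symm, (hf _).symm⟩
  · rintro ⟨i, j, k, hij, hjk, rfl, rfl, rfl⟩
    have hpair : [i, j, k].Pairwise (· < ·) := by simp [hij, hjk, hij.trans hjk]
    simpa using map_getElem_sublist hpair

/-- The induction principle matching the recursion of `phi`, which splits a word at the first return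
of its leading letter. -/
@[elab_as_elim]
theorem first_return_induction {motive : List α → Prop} (nil : motive [])
    (cons : ∀ a w, a ∉ w → motive w → motive (a :: w))
    (cons_append : ∀ a w r, a ∉ w → motive w → motive (a :: r) → motive (a :: (w ++ a :: r))) :
    ∀ l, motive l
  | [] => nil
  | a :: l => by
    by_cases ha : a ∈ l
    · obtain ⟨w, r, rfl, hw⟩ := eq_append_cons_of_mem ha
      exact cons_append a w r hw (first_return_induction nil cons cons_append w)
        (first_return_induction nil cons cons_append (a :: r))
    · exact cons a l ha (first_return_induction nil cons cons_append l)
termination_by l => l.length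

/-- The occurrences of `b` in `l` are not consecutive; `l` is sorted when it has no such letter. -/
def Unclumped (b : α) (l : List α) : Prop := ∃ x, x ≠ b ∧ [b, x, b] <+ l

/-- The word contains a subsequence equivalent to `abab`, i.e. the set partition is crossing; this
is what a letter unclumped in `phi l` leaves behind in `l`. -/
def HasCrossing (l : List α) : Prop := ∃ a b, a ≠ b ∧ [a, b, a, b] <+ l

namespace Unclumped

theorem mono (h : Unclumped b l) (hlm : l <+ m) : Unclumped b m :=
  let ⟨x, hx, hs⟩ := h
  ⟨x, hx, hs.trans hlm⟩

theorem mem (h : Unclumped b l) : b ∈ l :=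
  let ⟨_, _, hs⟩ := h
  hs.subset (by simp)

theorem two_le_count [DecidableEq α] (h : Unclumped b l) : 2 ≤ l.count b := by
  obtain ⟨x, hx, hs⟩ := h
  simpa [hx] using hs.count_le b

theorem three_le_length (h : Unclumped b l) : 3 ≤ l.length :=
  let ⟨_, _, hs⟩ := h
  hs.length_le

theorem reverse (h : Unclumped b l) : Unclumped b l.reverse :=
  let ⟨x, hx, hs⟩ := h
  ⟨x, hx, hs.reverse⟩

theorem of_append_left (h : Unclumped b (l ++ m)) (hb : b ∉ m) : Unclumped b l := by
  obtain ⟨x, hx, hs⟩ := h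
  obtain ⟨s, t, hst, hsl, htm⟩ := sublist_append_iff.1 hs
  rcases eq_nil_or_concat t with rfl | ⟨t, y, rfl⟩
  · exact ⟨x, hx, by rwa [hst, append_nil]⟩
  · have hyb : [b, x] ++ [b] = (s ++ t) ++ [y] := by simpa using hst
    obtain rfl : b = y := by simpa using append_inj_right' hyb rfl
    exact absurd (htm.subset (by simp)) hb

theorem of_append_right (h : Unclumped b (l ++ m)) (hb : b ∉ l) : Unclumped b m := by
  have hrev : Unclumped b (m.reverse ++ l.reverse) := by simpa using h.reverse
  simpa using (hrev.of_append_left (by simpa using hb)).reverse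

theorem of_cons_cons (h : Unclumped b (a :: a :: l)) : Unclumped b (a :: l) := by
  obtain ⟨x, hx, hs⟩ := h
  refine ⟨x, hx, ?_⟩
  rcases sublist_cons_iff.1 hs with hs | ⟨r, hr, hs⟩
  · exact hs
  · obtain ⟨rfl, rfl⟩ := cons.inj hr
    exact (hs.of_cons_of_ne hx).cons_cons b

theorem of_append_singleton (h : Unclumped b (l ++ [a])) (ha : l.getLast? = some a) :
    Unclumped b l := by
  obtain ⟨m, rfl⟩ := getLast?_eq_some_iff.1 ha
  have hrev : Unclumped b (a :: a :: m.reverse) := by simpa using h.reverse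
  simpa using hrev.of_cons_cons.reverse

end Unclumped

theorem HasCrossing.filter {f : α → Bool} (h : HasCrossing l)
    (hf : ∀ b, Unclumped b l → f b) : HasCrossing (l.filter f) := by
  obtain ⟨d, b, hdb, hs⟩ := h
  have hd : f d := hf d ⟨b, hdb.symm, Sublist.trans (by simp) hs⟩
  have hb : f b := hf b ⟨d, hdb, Sublist.trans (by simp) hs⟩
  exact ⟨d, b, hdb, by simpa [hd, hb] using hs.filter f⟩

end Words

section UnclumpedLetters

variable {α : Type*} [DecidableEq α] {b : α} {l : List α}

open Classical in
/-- The set of letters whose occurrences are not consecutive; its cardinality measures how far the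
word is from being sorted. -/
noncomputable def unclumpedLetters (l : List α) : Finset α := {b ∈ l.toFinset | Unclumped b l}

@[simp]
theorem mem_unclumpedLetters : b ∈ unclumpedLetters l ↔ Unclumped b l := by
  simpa [unclumpedLetters] using Unclumped.mem

theorem unclumpedLetters_subset_toFinset (l : List α) : unclumpedLetters l ⊆ l.toFinset :=
  fun _ hb ↦ mem_toFinset.2 (mem_unclumpedLetters.1 hb).mem

theorem HasCrossing.two_le_card_unclumpedLetters (h : HasCrossing l) :
    2 ≤ (unclumpedLetters l).card := by
  obtain ⟨d, b, hdb, hs⟩ := h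
  refine Finset.one_lt_card.2 ⟨d, ?_, b, ?_, hdb⟩
  · exact mem_unclumpedLetters.2 ⟨b, hdb.symm, Sublist.trans (by simp) hs⟩
  · exact mem_unclumpedLetters.2 ⟨d, hdb, Sublist.trans (by simp) hs⟩

theorem unclumped_and_count_eq_two (hlen : l.length ≤ 2 * (unclumpedLetters l).card) :
    ∀ b ∈ l, Unclumped b l ∧ l.count b = 2 := by
  have hle : ∀ b ∈ l.toFinset, (if b ∈ unclumpedLetters l then 2 else 0) ≤ l.count b := by
    intro b _
    split_ifs with hb
    · exact (mem_unclumpedLetters.1 hb).two_le_count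
    · exact Nat.zero_le _
  have hsum : ∑ b ∈ l.toFinset, (if b ∈ unclumpedLetters l then 2 else 0)
      = ∑ b ∈ l.toFinset, l.count b := by
    refine le_antisymm (Finset.sum_le_sum hle) ?_
    rw [sum_toFinset_count_eq_length, Finset.sum_ite_mem,
      Finset.inter_eq_right.2 (unclumpedLetters_subset_toFinset l), Finset.sum_const,
      smul_eq_mul, mul_comm]
    exact hlen
  intro b hb
  have hcount := (Finset.sum_eq_sum_iff_of_le hle).1 hsum b (mem_toFinset.2 hb)
  have hpos : 0 < l.count b := count_pos_iff.2 hb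
  split_ifs at hcount with hub
  · exact ⟨mem_unclumpedLetters.1 hub, hcount.symm⟩
  · omega

theorem two_mul_card_unclumpedLetters_le_length (l : List α) :
    2 * (unclumpedLetters l).card ≤ l.length := by
  calc 2 * (unclumpedLetters l).card = ∑ b ∈ unclumpedLetters l, 2 := by simp [mul_comm]
    _ ≤ ∑ b ∈ unclumpedLetters l, l.count b :=
        Finset.sum_le_sum fun b hb ↦ (mem_unclumpedLetters.1 hb).two_le_count
    _ ≤ ∑ b ∈ l.toFinset, l.count b :=
        Finset.sum_le_sum_of_subset (unclumpedLetters_subset_toFinset l)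
    _ = l.length := sum_toFinset_count_eq_length l

end UnclumpedLetters

theorem hasABA_iff_exists_unclumped {l : List ℕ} : HasABA l ↔ ∃ b, Unclumped b l := by
  simp only [HasABA, Unclumped, triple_sublist_iff_exists_get]
  constructor
  · rintro ⟨i, j, k, hij, hjk, hik, hne⟩
    exact ⟨l.get i, l.get j, hne, i, j, k, hij, hjk, rfl, rfl, hik.symm⟩
  · rintro ⟨b, x, hx, i, j, k, hij, hjk, rfl, rfl, hk⟩
    exact ⟨i, j, k, hij, hjk, hk.symm, hx⟩

theorem not_sortedWord_iff_hasABA {l : List ℕ} : ¬ SortedWord l ↔ HasABA l := by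
  unfold SortedWord HasABA
  push Not
  rfl

namespace HasABA

variable {a : ℕ} {l : List ℕ}

theorem mono {m : List ℕ} (h : HasABA l) (hlm : l <+ m) : HasABA m := by
  rw [hasABA_iff_exists_unclumped] at h ⊢
  exact h.imp fun _ hb ↦ hb.mono hlm

theorem three_le_length (h : HasABA l) : 3 ≤ l.length :=
  let ⟨_, hb⟩ := hasABA_iff_exists_unclumped.1 h
  hb.three_le_length

theorem of_append_singleton (h : HasABA (l ++ [a])) (ha : a ∉ l ∨ l.getLast? = some a) :
    HasABA l := by
  rw [hasABA_iff_exists_unclumped] at h ⊢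
  obtain ⟨b, hb⟩ := h
  rcases ha with ha | ha
  · by_cases hba : b = a
    · subst hba
      exact absurd (hb.of_append_right ha).three_le_length (by simp)
    · exact ⟨b, hb.of_append_left (by simpa using hba)⟩
  · exact ⟨b, hb.of_append_singleton ha⟩

end HasABA

section StackRecursion

variable {a x t : ℕ} {l r w st : List ℕ}

theorem phiAux_cons_of_not_hasABA (h : ¬ HasABA (x :: st)) :
    phiAux (x :: l) st = phiAux l (x :: st) := by
  cases st with
  | nil => rw [phiAux]
  | cons t st => rw [phiAux, if_neg h]

theorem phiAux_cons_of_hasABA (h : HasABA (x :: t :: st)) :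
    phiAux (x :: l) (t :: st) = t :: phiAux (x :: l) st := by
  rw [phiAux, if_pos h]

theorem phiAux_perm (l st : List ℕ) : phiAux l st ~ l ++ st := by
  fun_induction phiAux l st with
  | case1 st => simp
  | case2 x xs ih => exact ih.trans (by simp)
  | case3 x xs t st _ ih => exact (ih.cons t).trans perm_middle.symm
  | case4 x xs t st _ ih => exact ih.trans perm_middle

theorem phiAux_cons_append_singleton (hst : a ∉ st) :
    phiAux (a :: r) (st ++ [a]) = st ++ phiAux (a :: r) [a] := by
  induction st with
  | nil => rfl
  | cons t st ih =>
    rw [mem_cons, not_or] at hst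
    have haba : HasABA (a :: t :: (st ++ [a])) :=
      hasABA_iff_exists_unclumped.2 ⟨a, t, Ne.symm hst.1, by simp⟩
    rw [cons_append, phiAux_cons_of_hasABA haba, ih hst.2, cons_append]

-- While a word without `a` is read, the letter `a` at the bottom takes part in no `aba`; if the
-- remainder `r` starts with `a`, reading it empties the stack down to that bottom letter.
theorem phiAux_append_of_bottom (hw : a ∉ w) (hst : a ∉ st) (hr : ∀ c ∈ r.head?, c = a) :
    phiAux (w ++ r) (st ++ [a]) = phiAux w st ++ phiAux r [a] := by
  fun_induction phiAux w st with
  | case1 st =>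
    rcases r with _ | ⟨c, r⟩
    · simp only [append_nil, phiAux]
    · obtain rfl : c = a := hr c rfl
      exact phiAux_cons_append_singleton hst
  | case2 x xs ih =>
    rw [mem_cons, not_or] at hw
    have hpush : ¬ HasABA ([x] ++ [a]) := fun h ↦
      absurd h.three_le_length (by simp)
    exact (phiAux_cons_of_not_hasABA hpush).trans (ih hw.2 (by simpa using hw.1))
  | case3 x xs t st h ih =>
    have hpop : HasABA (x :: t :: (st ++ [a])) := h.mono (by simp)
    have hst' : a ∉ st := fun hmem ↦ hst (mem_cons_of_mem t hmem)
    exact (phiAux_cons_of_hasABA hpop).trans (congrArg (t :: ·) (ih hw hst'))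
  | case4 x xs t st h ih =>
    rw [mem_cons, not_or] at hw
    have hxst : a ∉ x :: t :: st := not_mem_cons_of_ne_of_not_mem hw.1 hst
    have hpush : ¬ HasABA (x :: t :: (st ++ [a])) := fun h' ↦
      h (HasABA.of_append_singleton (l := x :: t :: st) h' (.inl hxst))
    exact (phiAux_cons_of_not_hasABA hpush).trans (ih hw.2 hxst)

theorem phiAux_append_singleton_of_getLast? (ha : st.getLast? = some a) :
    phiAux l (st ++ [a]) = phiAux l st ++ [a] := by
  fun_induction phiAux l st with
  | case1 st => rw [phiAux]
  | case2 => simp at ha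
  | case3 x xs t st h ih =>
    have hpop : HasABA (x :: t :: (st ++ [a])) := h.mono (by simp)
    have hst : st ≠ [] := by
      rintro rfl
      exact absurd h.three_le_length (by simp)
    rw [getLast?_cons_of_ne_nil hst] at ha
    exact (phiAux_cons_of_hasABA hpop).trans (congrArg (t :: ·) (ih ha))
  | case4 x xs t st h ih =>
    have hlast : (x :: t :: st).getLast? = some a := by simpa using ha
    have hpush : ¬ HasABA (x :: t :: (st ++ [a])) := fun h' ↦
      h (HasABA.of_append_singleton (l := x :: t :: st) h' (.inr hlast))
    exact (phiAux_cons_of_not_hasABA hpush).trans (ih hlast)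

end StackRecursion

section Phi

variable {a b : ℕ} {l r w : List ℕ}

theorem phi_perm (l : List ℕ) : phi l ~ l := by
  simpa [phi] using phiAux_perm l []

@[simp]
theorem mem_phi : a ∈ phi l ↔ a ∈ l := (phi_perm l).mem_iff

@[simp]
theorem phi_nil : phi [] = [] := by rw [phi, phiAux]

theorem phi_cons (a : ℕ) (l : List ℕ) : phi (a :: l) = phiAux l [a] := by
  rw [phi, phiAux]

theorem phi_cons_of_notMem (hw : a ∉ w) : phi (a :: w) = phi w ++ [a] := by
  have hbottom := phiAux_append_of_bottom (r := []) hw not_mem_nil (by simp)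
  rwa [append_nil, nil_append, phiAux, ← phi_cons] at hbottom

theorem phi_cons_append_cons (hw : a ∉ w) (r : List ℕ) :
    phi (a :: (w ++ a :: r)) = phi w ++ (phi (a :: r) ++ [a]) := by
  have hpush : ¬ HasABA ([a] ++ [a]) := fun h ↦ absurd h.three_le_length (by simp)
  calc phi (a :: (w ++ a :: r)) = phiAux (w ++ a :: r) ([] ++ [a]) := phi_cons _ _
    _ = phi w ++ phiAux (a :: r) [a] := phiAux_append_of_bottom hw not_mem_nil (by simp)
    _ = phi w ++ phiAux r ([a] ++ [a]) := by
      rw [phiAux_cons_of_not_hasABA (st := [a]) hpush]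
      rfl
    _ = phi w ++ (phi (a :: r) ++ [a]) := by
      rw [phiAux_append_singleton_of_getLast? rfl, ← phi_cons]

theorem getLast?_phi_cons (a : ℕ) (l : List ℕ) : (phi (a :: l)).getLast? = some a := by
  by_cases ha : a ∈ l
  · obtain ⟨w, r, rfl, hw⟩ := eq_append_cons_of_mem ha
    rw [phi_cons_append_cons hw, ← append_assoc, getLast?_concat]
  · rw [phi_cons_of_notMem ha, getLast?_concat]

theorem phi_eq_reverse_of_nodup (h : w.Nodup) : phi w = w.reverse := by
  induction w with
  | nil => exact phi_nil
  | cons a w ih =>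
    rw [nodup_cons] at h
    rw [phi_cons_of_notMem h.1, ih h.2, reverse_cons]

theorem phi_filter {f : ℕ → Bool} (hf : ∀ b, Unclumped b l → f b) :
    phi (l.filter f) = (phi l).filter f := by
  induction l using first_return_induction with
  | nil => simp
  | cons a w ha ih =>
    have ihw := ih fun b hb ↦ hf b (hb.mono (by simp))
    have haf : a ∉ w.filter f := fun h ↦ ha (mem_of_mem_filter h)
    rw [phi_cons_of_notMem ha, filter_append, ← ihw]
    by_cases hfa : f a
    · rw [filter_cons_of_pos hfa, phi_cons_of_notMem haf, filter_cons_of_pos hfa, filter_nil]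
    · rw [filter_cons_of_neg hfa, filter_cons_of_neg hfa, filter_nil, append_nil]
  | cons_append a w r ha ihw ihr =>
    have ihw' := ihw fun b hb ↦ hf b (hb.mono ((sublist_append_left _ _).cons a))
    have ihr' := ihr fun b hb ↦ hf b (hb.mono ((sublist_append_right _ _).cons a))
    have haf : a ∉ w.filter f := fun h ↦ ha (mem_of_mem_filter h)
    rw [phi_cons_append_cons ha, filter_append, filter_append, ← ihw', ← ihr']
    by_cases hfa : f a
    · simp only [filter_append, filter_cons_of_pos hfa, phi_cons_append_cons haf, filter_nil]
    · have hw : w = [] := by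
        refine eq_nil_iff_forall_not_mem.2 fun x hx ↦ hfa (hf a ⟨x, ?_, ?_⟩)
        · exact ne_of_mem_of_not_mem hx ha
        · exact ((singleton_sublist.2 hx).append (by simp)).cons_cons a
      simp [hw, hfa]

theorem exists_abab_sublist_of_unclumped_phi (h : Unclumped b (phi l)) :
    ∃ d, l.idxOf d < l.idxOf b ∧ [d, b, d, b] <+ l := by
  induction l using first_return_induction with
  | nil => simpa using h.mem
  | cons a w ha ih =>
    rw [phi_cons_of_notMem ha] at h
    by_cases hba : b = a
    · subst hba
      exact absurd (h.of_append_right (by simpa using ha)).three_le_length (by simp)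
    · obtain ⟨d, hlt, hs⟩ := ih (h.of_append_left (by simpa using hba))
      have hda : d ≠ a := ne_of_mem_of_not_mem (hs.subset (by simp)) ha
      refine ⟨d, ?_, hs.cons a⟩
      rw [idxOf_cons_ne _ hda.symm, idxOf_cons_ne _ (Ne.symm hba)]
      exact Nat.succ_lt_succ hlt
  | cons_append a w r ha ihw ihr =>
    rw [phi_cons_append_cons ha] at h
    by_cases hba : b = a
    · subst hba
      have hr := (h.of_append_right (by simpa using ha)).of_append_singleton
        (getLast?_phi_cons b r)
      obtain ⟨d, hlt, -⟩ := ihr hr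
      simp at hlt
    by_cases hbw : b ∈ w
    · by_cases hbr : b ∈ r
      · refine ⟨a, by simp [idxOf_cons_ne _ (Ne.symm hba)], Sublist.cons_cons a ?_⟩
        exact (singleton_sublist.2 hbw).append ((singleton_sublist.2 hbr).cons_cons a)
      · obtain ⟨d, hlt, hs⟩ := ihw (h.of_append_left (by simp [hba, hbr]))
        have hdw : d ∈ w := hs.subset (by simp)
        refine ⟨d, ?_, (hs.trans (sublist_append_left _ _)).cons a⟩
        rw [idxOf_cons_ne _ (ne_of_mem_of_not_mem hdw ha).symm, idxOf_cons_ne _ (Ne.symm hba),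
          idxOf_append_of_mem hdw, idxOf_append_of_mem hbw]
        exact Nat.succ_lt_succ hlt
    · have hr := (h.of_append_right (by simpa using hbw)).of_append_left (by simpa using hba)
      obtain ⟨d, hlt, hs⟩ := ihr hr
      refine ⟨d, ?_, (hs.trans (sublist_append_right _ _)).cons a⟩
      by_cases hda : d = a
      · simp [hda, idxOf_cons_ne _ (Ne.symm hba)]
      · rw [idxOf_cons_ne _ (Ne.symm hda), idxOf_cons_ne _ (Ne.symm hba),
          idxOf_append_of_notMem hbw, idxOf_append]
        have hlen := idxOf_le_length (a := d) (l := w)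
        split_ifs <;> omega

theorem unclumped_of_unclumped_phi (h : Unclumped b (phi l)) : Unclumped b l := by
  obtain ⟨d, hlt, hs⟩ := exists_abab_sublist_of_unclumped_phi h
  exact ⟨d, fun hdb ↦ hlt.ne (by rw [hdb]), Sublist.trans (by simp) hs⟩

theorem hasCrossing_of_unclumped_phi (h : Unclumped b (phi l)) : HasCrossing l := by
  obtain ⟨d, hlt, hs⟩ := exists_abab_sublist_of_unclumped_phi h
  exact ⟨d, b, fun hdb ↦ hlt.ne (by rw [hdb]), hs⟩

end Phi

theorem iterate_phi_filter {f : ℕ → Bool} (k : ℕ) {l : List ℕ} (hf : ∀ b, Unclumped b l → f b) :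
    phi^[k] (l.filter f) = (phi^[k] l).filter f := by
  induction k generalizing l with
  | zero => rfl
  | succ k ih =>
    rw [Function.iterate_succ_apply, Function.iterate_succ_apply, phi_filter hf]
    exact ih fun b hb ↦ hf b (unclumped_of_unclumped_phi hb)

theorem unclumped_of_unclumped_iterate_phi (k : ℕ) {b : ℕ} {l : List ℕ}
    (h : Unclumped b (phi^[k] l)) : Unclumped b l := by
  induction k generalizing l with
  | zero => exact h
  | succ k ih => exact unclumped_of_unclumped_phi (ih h)

section Counting

variable {l : List ℕ}

theorem unclumpedLetters_phi_subset (l : List ℕ) :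
    unclumpedLetters (phi l) ⊆ unclumpedLetters l := fun _ hb ↦
  mem_unclumpedLetters.2 (unclumped_of_unclumped_phi (mem_unclumpedLetters.1 hb))

-- The unclumped letter that starts first in `l` becomes clumped.
theorem unclumpedLetters_phi_ssubset (h : (unclumpedLetters l).Nonempty) :
    unclumpedLetters (phi l) ⊂ unclumpedLetters l := by
  obtain ⟨a, ha, hmin⟩ := (unclumpedLetters l).exists_min_image (l.idxOf ·) h
  refine (Finset.ssubset_iff_of_subset (unclumpedLetters_phi_subset l)).2 ⟨a, ha, fun ha' ↦ ?_⟩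
  obtain ⟨d, hlt, hs⟩ := exists_abab_sublist_of_unclumped_phi (mem_unclumpedLetters.1 ha')
  have hd : Unclumped d l := ⟨a, fun had ↦ hlt.ne (by rw [had]), Sublist.trans (by simp) hs⟩
  exact hlt.not_ge (hmin d (mem_unclumpedLetters.2 hd))

theorem card_unclumpedLetters_iterate_phi_le (k : ℕ) (l : List ℕ) :
    (unclumpedLetters (phi^[k] l)).card ≤ (unclumpedLetters l).card - k := by
  induction k generalizing l with
  | zero => simp
  | succ k ih =>
    have hstep : (unclumpedLetters (phi l)).card ≤ (unclumpedLetters l).card - 1 := by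
      rcases (unclumpedLetters l).eq_empty_or_nonempty with hl | hl
      · simp [Finset.subset_empty.1 (hl ▸ unclumpedLetters_phi_subset l)]
      · exact Nat.le_sub_one_of_lt (Finset.card_lt_card (unclumpedLetters_phi_ssubset hl))
    have hiter := ih (phi l)
    rw [Function.iterate_succ_apply]
    omega

theorem add_two_le_card_unclumpedLetters {k : ℕ} (h : HasCrossing (phi^[k] l)) :
    k + 2 ≤ (unclumpedLetters l).card := by
  have hcard := h.two_le_card_unclumpedLetters
  have hiter := card_unclumpedLetters_iterate_phi_le k l
  omega

theorem nodup_of_forall_unclumped_phi {w : List ℕ}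
    (h : ∀ b, 2 ≤ w.count b → Unclumped b (phi w)) : w.Nodup := by
  have hsub : unclumpedLetters w ⊆ unclumpedLetters (phi w) := fun b hb ↦
    mem_unclumpedLetters.2 (h b (mem_unclumpedLetters.1 hb).two_le_count)
  have hempty : unclumpedLetters w = ∅ := Finset.not_nonempty_iff_eq_empty.1 fun hw ↦
    (unclumpedLetters_phi_ssubset hw).not_subset hsub
  refine nodup_iff_count_le_one.2 fun b ↦ Nat.le_of_lt_succ (not_le.1 fun hb ↦ ?_)
  have hmem := mem_unclumpedLetters.2 (unclumped_of_unclumped_phi (h b hb))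
  simp [hempty] at hmem

theorem nodup_and_perm_of_unclumped_phi_append {u v : List ℕ}
    (hcount : ∀ b ∈ u ++ v, (u ++ v).count b = 2)
    (hun : ∀ b ∈ u ++ v, Unclumped b (phi u ++ phi v)) : u.Nodup ∧ v.Nodup ∧ u ~ v := by
  simp only [mem_append, count_append] at hcount hun
  have hu : u.Nodup := nodup_of_forall_unclumped_phi fun b hb ↦ by
    have hbu : b ∈ u := count_pos_iff.1 (by omega)
    have hbv : b ∉ v := count_eq_zero.1 (by have := hcount b (.inl hbu); omega)
    exact (hun b (.inl hbu)).of_append_left (by simpa using hbv)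
  have hv : v.Nodup := nodup_of_forall_unclumped_phi fun b hb ↦ by
    have hbv : b ∈ v := count_pos_iff.1 (by omega)
    have hbu : b ∉ u := count_eq_zero.1 (by have := hcount b (.inr hbv); omega)
    exact (hun b (.inr hbv)).of_append_right (by simpa using hbu)
  refine ⟨hu, hv, (perm_ext_iff_of_nodup hu hv).2 fun b ↦ ?_⟩
  have hub := nodup_iff_count_le_one.1 hu b
  have hvb := nodup_iff_count_le_one.1 hv b
  constructor
  · intro hb
    exact count_pos_iff.1 (by have := hcount b (.inl hb); omega)
  · intro hb
    exact count_pos_iff.1 (by have := hcount b (.inr hb); omega)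

end Counting

section Rigidity

variable {a : ℕ} {u v : List ℕ}

theorem exists_eq_cons_append_cons {l : List ℕ} (hl : l ≠ []) (hcount : ∀ b ∈ l, l.count b = 2) :
    ∃ a u v, a ∉ u ∧ a ∉ v ∧ l = a :: (u ++ a :: v) := by
  obtain ⟨a, t, rfl⟩ := exists_cons_of_ne_nil hl
  have hat : t.count a = 1 := by simpa using hcount a mem_cons_self
  obtain ⟨u, v, rfl, hu⟩ := eq_append_cons_of_mem (count_pos_iff.1 (by omega : 0 < t.count a))
  refine ⟨a, u, v, hu, ?_, rfl⟩
  rw [count_append, count_cons_self] at hat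
  exact count_eq_zero.1 (by omega)

theorem phi_cons_append_cons_of_notMem (hu : a ∉ u) (hv : a ∉ v) :
    phi (a :: (u ++ a :: v)) = (phi u ++ phi v) ++ [a, a] := by
  simp [phi_cons_append_cons hu, phi_cons_of_notMem hv]

theorem unclumped_phi_append (hu : a ∉ u) (hv : a ∉ v)
    (hun : ∀ b ∈ a :: (u ++ a :: v), Unclumped b (a :: (u ++ a :: v)))
    (hcard : (unclumpedLetters (a :: (u ++ a :: v))).card
      ≤ (unclumpedLetters (phi (a :: (u ++ a :: v)))).card + 1) :
    ∀ b ∈ u ++ v, Unclumped b (phi u ++ phi v) := by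
  have hphi := phi_cons_append_cons_of_notMem hu hv
  set p := a :: (u ++ a :: v)
  have ha : ¬ Unclumped a (phi p) := fun h ↦ by
    rw [hphi] at h
    exact absurd (h.of_append_right (by simp [hu, hv])).three_le_length (by simp)
  have hap : a ∈ unclumpedLetters p := mem_unclumpedLetters.2 (hun a mem_cons_self)
  have hsub : unclumpedLetters (phi p) ⊆ (unclumpedLetters p).erase a :=
    Finset.subset_erase.2 ⟨unclumpedLetters_phi_subset p, by simpa using ha⟩
  have herase : unclumpedLetters (phi p) = (unclumpedLetters p).erase a :=
    Finset.eq_of_subset_of_card_le hsub (by rw [Finset.card_erase_of_mem hap]; omega)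
  intro b hb
  have hba : b ≠ a := ne_of_mem_of_not_mem hb (by simp [hu, hv])
  have hbp : b ∈ p := (((Sublist.refl u).append (sublist_cons_self a v)).cons a).subset hb
  have hbphi : b ∈ unclumpedLetters (phi p) := by
    rw [herase]
    exact Finset.mem_erase.2 ⟨hba, mem_unclumpedLetters.2 (hun b hbp)⟩
  rw [mem_unclumpedLetters, hphi] at hbphi
  exact hbphi.of_append_left (by simpa using hba)

theorem hasCrossing_iterate_phi_append {k : ℕ} (hu : a ∉ u) (hv : a ∉ v)
    (h : HasCrossing (phi^[k + 1] (a :: (u ++ a :: v)))) :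
    HasCrossing (phi^[k] (phi u ++ phi v)) := by
  have hphi := phi_cons_append_cons_of_notMem hu hv
  have hf : ∀ b, Unclumped b (phi u ++ phi v ++ [a, a]) → decide (b ≠ a) := by
    intro b hb
    refine decide_eq_true fun hba ↦ ?_
    subst hba
    exact absurd (hb.of_append_right (by simp [hu, hv])).three_le_length (by simp)
  have hfilter : (phi u ++ phi v ++ [a, a]).filter (· ≠ a) = phi u ++ phi v := by
    have hself : (phi u ++ phi v).filter (· ≠ a) = phi u ++ phi v :=
      filter_eq_self.2 fun b hb ↦ decide_eq_true (ne_of_mem_of_not_mem hb (by simp [hu, hv]))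
    rw [filter_append, hself]
    simp
  rw [Function.iterate_succ_apply, hphi] at h
  rw [← hfilter, iterate_phi_filter k hf]
  exact h.filter fun b hb ↦ hf b (unclumped_of_unclumped_iterate_phi k hb)

theorem exists_nodup_eq_append_self (k : ℕ) {p : List ℕ} (hlen : p.length ≤ 2 * (k + 2))
    (h : HasCrossing (phi^[k] p)) : ∃ w, w.Nodup ∧ p = w ++ w := by
  induction k generalizing p with
  | zero =>
    obtain ⟨d, b, hdb, hs⟩ := h
    exact ⟨[d, b], by simpa using hdb, (hs.eq_of_length_le hlen).symm⟩
  | succ k ih =>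
    have hp : k + 3 ≤ (unclumpedLetters p).card := add_two_le_card_unclumpedLetters h
    have hphi : k + 2 ≤ (unclumpedLetters (phi p)).card := add_two_le_card_unclumpedLetters h
    have hple := two_mul_card_unclumpedLetters_le_length p
    have hdouble := unclumped_and_count_eq_two (l := p) (by omega)
    obtain ⟨a, u, v, hu, hv, rfl⟩ := exists_eq_cons_append_cons
      (ne_nil_of_length_pos (by omega)) fun b hb ↦ (hdouble b hb).2
    have hcount : ∀ b ∈ u ++ v, (u ++ v).count b = 2 := fun b hb ↦ by
      have hab : a ≠ b := (ne_of_mem_of_not_mem hb (by simp [hu, hv])).symm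
      have hb' : b ∈ a :: (u ++ a :: v) :=
        (((Sublist.refl u).append (sublist_cons_self a v)).cons a).subset hb
      simpa [hab] using (hdouble b hb').2
    have hun := unclumped_phi_append hu hv (fun b hb ↦ (hdouble b hb).1) (by omega)
    obtain ⟨hund, hvnd, huv⟩ := nodup_and_perm_of_unclumped_phi_append hcount hun
    have hlen' : (phi u ++ phi v).length ≤ 2 * (k + 2) := by
      simp only [length_append, length_cons, (phi_perm _).length_eq] at hlen ⊢
      omega
    obtain ⟨w, -, hw⟩ := ih hlen' (hasCrossing_iterate_phi_append hu hv h)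
    rw [phi_eq_reverse_of_nodup hund, phi_eq_reverse_of_nodup hvnd] at hw
    have hwlen : u.reverse.length = w.length := by
      have := congrArg length hw
      simp only [length_append, length_reverse, ← huv.length_eq] at this ⊢
      omega
    obtain ⟨huw, hvw⟩ := append_inj hw hwlen
    obtain rfl : u = v := reverse_injective (huw.trans hvw.symm)
    exact ⟨a :: u, nodup_cons.2 ⟨hu, hund⟩, rfl⟩

end Rigidity

/-- If N(p) ≥ 3, |p| ≤ 2N(p) and φ_{aba}^{N(p)-1}(p) is not sorted, then
p is equivalent to (a₁⋯a_{N(p)})². -/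
theorem stmt8 (p : List ℕ) (hN : 3 ≤ Nletters p) (hlen : p.length ≤ 2 * Nletters p)
    (h : ¬ SortedWord (phi^[Nletters p - 1] p)) :
    ∃ w : List ℕ, w.Nodup ∧ w.length = Nletters p ∧ EquivWords p (w ++ w) := by
  obtain ⟨k, hk⟩ : ∃ k, Nletters p = k + 2 := Nat.exists_eq_add_of_le' (by omega)
  have hcross : HasCrossing (phi^[k] p) := by
    rw [hk, Nat.add_succ_sub_one, Function.iterate_succ_apply', not_sortedWord_iff_hasABA,
      hasABA_iff_exists_unclumped] at h
    exact h.elim fun _ hb ↦ hasCrossing_of_unclumped_phi hb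
  obtain ⟨w, hw, rfl⟩ := exists_nodup_eq_append_self k (hk ▸ hlen) hcross
  refine ⟨w, hw, ?_, Equiv.refl ℕ, by simp⟩
  rw [Nletters, toFinset_append, Finset.union_self, toFinset_card_of_nodup hw]
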